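/- arXiv:2512.00309 — 3 statements merged into one kernel-verified Lean document; each statement's English description precedes it below -/
import Mathlib

section
/- Let K ≥ 1 and for each k ∈ {1,…,K} let h_k > 0, ν_k > 0, P_k > 0, σ̂_k² > 0, and let σ_w² > 0. For a ∈ ℝ and b ∈ ℝ^K define MSE(a,b) = Σ_{k=1}^K (a h_k b_k − 1)² σ̂_k² + a² σ_w², and let the feasible set be 𝔽 = {(a,b) : b_k² ν_k² ≤ P_k for all k}. Then there exists a global minimizer (a*, b*) of MSE over 𝔽 with a* > 0 having the following threshold structure: with S = {k : a* h_k √(P_k)/ν_k ≤ 1}, one has b*_k = √(P_k)/ν_k for k ∈ S (full power) and b*_k = 1/(a* h_k) for k ∉ S (channel inversion), and a* = (Σ_{k∈S} h_k σ̂_k² √(P_k)/ν_k) / (Σ_{k∈S} h_k² σ̂_k² P_k/ν_k² + σ_w²). -/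
open scoped Classical
open Finset

/-!
For a fixed receiver scaling `a`, the received amplitude `a h_k b_k` of device `k` can be any
number up to `|a| c_k`, where `c_k = h_k √P_k / ν_k`. Its smallest squared distance to `1` is the
squared positive part of `1 - |a| c_k`, attained by full power or channel inversion. This leaves
the convex function `a ↦ ∑ k, ((1 - a c_k)⁺)² σ̂_k² + a² σ_w²` to minimize over `a ≥ 0`. A
stationary point exists by the intermediate value theorem, it is a global minimizer by convexity,
and solving the stationarity equation for `a` over the devices with `a c_k ≤ 1` gives the closed
form.
-/

theorem exists_pos_mul_eq_of_antitone {f : ℝ → ℝ} (hf : Continuous f) (hanti : Antitone f)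
    (hf0 : 0 < f 0) {w : ℝ} (hw : 0 < w) : ∃ a, 0 < a ∧ a * w = f a := by
  have hM : 0 < f 0 / w := div_pos hf0 hw
  have hend : f (f 0 / w) ≤ f 0 / w * w := by
    rw [div_mul_cancel₀ _ hw.ne']
    exact hanti hM.le
  obtain ⟨a, ⟨ha, -⟩, hroot⟩ := intermediate_value_Icc hM.le
    (f := fun a => a * w - f a) (by fun_prop) ⟨by linarith, sub_nonneg.2 hend⟩
  have hfix : a * w = f a := sub_eq_zero.1 hroot
  refine ⟨a, ha.lt_of_ne ?_, hfix⟩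
  rintro rfl
  linarith

theorem sq_posPart_add_two_mul_le (u v : ℝ) : u⁺ ^ 2 + 2 * u⁺ * (v - u) ≤ v⁺ ^ 2 := by
  have hu : u⁺ * u = u⁺ ^ 2 := by
    rcases le_total u 0 with h | h
    · simp [posPart_eq_zero.2 h]
    · rw [posPart_eq_self.2 h, sq]
  have hv : u⁺ * v ≤ u⁺ * v⁺ := mul_le_mul_of_nonneg_left (le_posPart v) (posPart_nonneg u)
  linarith [sq_nonneg (u⁺ - v⁺)]

theorem sq_posPart_one_sub_le {x y : ℝ} (hxy : x ≤ y) : (1 - y)⁺ ^ 2 ≤ (x - 1) ^ 2 := by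
  have hle : (1 - y)⁺ ≤ |x - 1| := by
    rw [abs_sub_comm]
    exact sup_le (by linarith [le_abs_self (1 - x)]) (abs_nonneg _)
  exact sq_abs (x - 1) ▸ pow_le_pow_left₀ (posPart_nonneg _) hle 2

theorem abs_le_sqrt_div_iff {x ν P : ℝ} (hν : 0 < ν) (hP : 0 ≤ P) :
    |x| ≤ √P / ν ↔ x ^ 2 * ν ^ 2 ≤ P := by
  rw [le_div_iff₀ hν, Real.le_sqrt (by positivity) hP, mul_pow, sq_abs]

/-- The amplitude of a device with channel gain `h` and peak amplitude `p` under receiver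
scaling `a`: full power as long as the received amplitude does not exceed the target `1`, and
channel inversion otherwise. -/
noncomputable def thresholdAmplitude (h p a : ℝ) : ℝ :=
  if a * h * p ≤ 1 then p else 1 / (a * h)

theorem abs_thresholdAmplitude_le (h a : ℝ) {p : ℝ} (hp : 0 ≤ p) :
    |thresholdAmplitude h p a| ≤ p := by
  unfold thresholdAmplitude
  split_ifs with hle
  · exact (abs_of_nonneg hp).le
  · have hlt : 1 < a * h * p := not_le.1 hle
    have hah : 0 < a * h := pos_of_mul_pos_left (one_pos.trans hlt) hp
    rw [abs_of_pos (one_div_pos.2 hah), div_le_iff₀' hah]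
    exact hlt.le

theorem one_sub_mul_thresholdAmplitude (h p a : ℝ) :
    1 - a * h * thresholdAmplitude h p a = (1 - a * (h * p))⁺ := by
  rw [← mul_assoc]
  unfold thresholdAmplitude
  split_ifs with hle
  · rw [posPart_eq_self.2 (sub_nonneg.2 hle)]
  · have hlt : 1 < a * h * p := not_le.1 hle
    have hah : a * h ≠ 0 := left_ne_zero_of_mul (one_pos.trans hlt).ne'
    rw [posPart_eq_zero.2 (sub_nonpos.2 hlt.le), mul_one_div_cancel hah, sub_self]

section MSE

variable {ι : Type*} [Fintype ι] {h p c s b : ι → ℝ} {w a : ℝ}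

/-- The AirComp aggregation error with channel gains `h`, feature variances `s`, noise variance
`w`, receiver scaling `a` and transmit coefficients `b`. -/
def aircompMSE (h s : ι → ℝ) (w a : ℝ) (b : ι → ℝ) : ℝ :=
  (∑ k, (a * h k * b k - 1) ^ 2 * s k) + a ^ 2 * w

/-- For `0 ≤ a`, the smallest aggregation error over the transmit coefficients, where `c k` is the
product of the channel gain and the peak amplitude of device `k`. -/
def reducedMSE (c s : ι → ℝ) (w a : ℝ) : ℝ :=
  (∑ k, (1 - a * c k)⁺ ^ 2 * s k) + a ^ 2 * w

/-- The derivative of `reducedMSE c s w` at `a` is `2 * (a * w - residualSum c s a)`, so that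
`a * w = residualSum c s a` is the stationarity equation. -/
def residualSum (c s : ι → ℝ) (a : ℝ) : ℝ :=
  ∑ k, s k * c k * (1 - a * c k)⁺

theorem reducedMSE_abs_le_aircompMSE (hh : ∀ k, 0 ≤ h k) (hs : ∀ k, 0 ≤ s k)
    (hb : ∀ k, |b k| ≤ p k) : reducedMSE (h * p) s w |a| ≤ aircompMSE h s w a b := by
  have hamp (k : ι) : a * h k * b k ≤ |a| * (h k * p k) := calc
    a * h k * b k ≤ |a * h k * b k| := le_abs_self _
    _ = |a| * (h k * |b k|) := by rw [abs_mul, abs_mul, abs_of_nonneg (hh k), mul_assoc]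
    _ ≤ |a| * (h k * p k) := by gcongr; exacts [hh k, hb k]
  unfold reducedMSE aircompMSE
  rw [sq_abs]
  gcongr ?_ + _
  exact sum_le_sum fun k _ => mul_le_mul_of_nonneg_right (sq_posPart_one_sub_le (hamp k)) (hs k)

theorem aircompMSE_thresholdAmplitude (h p s : ι → ℝ) (w a : ℝ) :
    aircompMSE h s w a (fun k => thresholdAmplitude (h k) (p k) a) = reducedMSE (h * p) s w a := by
  simp only [aircompMSE, reducedMSE, Pi.mul_apply, ← one_sub_mul_thresholdAmplitude,
    sub_sq_comm (1 : ℝ)]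

theorem reducedMSE_le_of_stationary (hs : ∀ k, 0 ≤ s k) (hw : 0 ≤ w)
    (hstat : a * w = residualSum c s a) (t : ℝ) : reducedMSE c s w a ≤ reducedMSE c s w t := by
  have htangent : (∑ k, (1 - a * c k)⁺ ^ 2 * s k) + 2 * (a - t) * residualSum c s a ≤
      ∑ k, (1 - t * c k)⁺ ^ 2 * s k := by
    rw [residualSum, mul_sum, ← sum_add_distrib]
    refine sum_le_sum fun k _ => ?_
    calc _ = ((1 - a * c k)⁺ ^ 2 +
            2 * (1 - a * c k)⁺ * ((1 - t * c k) - (1 - a * c k))) * s k := by ring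
      _ ≤ _ := mul_le_mul_of_nonneg_right (sq_posPart_add_two_mul_le _ _) (hs k)
  have hsq : 0 ≤ (a - t) ^ 2 * w := mul_nonneg (sq_nonneg _) hw
  rw [← hstat] at htangent
  unfold reducedMSE
  linarith

theorem aircompMSE_thresholdAmplitude_le_of_stationary (hh : ∀ k, 0 ≤ h k) (hs : ∀ k, 0 ≤ s k)
    (hw : 0 ≤ w) (hstat : a * w = residualSum (h * p) s a) (t : ℝ) (hb : ∀ k, |b k| ≤ p k) :
    aircompMSE h s w a (fun k => thresholdAmplitude (h k) (p k) a) ≤ aircompMSE h s w t b := calc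
  _ = reducedMSE (h * p) s w a := aircompMSE_thresholdAmplitude h p s w a
  _ ≤ reducedMSE (h * p) s w |t| := reducedMSE_le_of_stationary hs hw hstat _
  _ ≤ _ := reducedMSE_abs_le_aircompMSE hh hs hb

theorem antitone_residualSum (hc : ∀ k, 0 ≤ c k) (hs : ∀ k, 0 ≤ s k) :
    Antitone (residualSum c s) := fun _ _ hle =>
  sum_le_sum fun k _ => mul_le_mul_of_nonneg_left
    (posPart_mono (sub_le_sub_left (mul_le_mul_of_nonneg_right hle (hc k)) 1))
    (mul_nonneg (hs k) (hc k))

theorem exists_pos_stationary (hc : ∀ k, 0 ≤ c k) (hs : ∀ k, 0 ≤ s k)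
    (hactive : ∃ k, 0 < c k ∧ 0 < s k) (hw : 0 < w) :
    ∃ a, 0 < a ∧ a * w = residualSum c s a := by
  have hcont : Continuous (residualSum c s) :=
    continuous_finsetSum _ fun k _ =>
      continuous_const.mul (continuous_posPart.comp (by fun_prop))
  have hzero : 0 < residualSum c s 0 := by
    obtain ⟨k, hck, hsk⟩ := hactive
    simp only [residualSum, zero_mul, sub_zero, posPart_eq_self.2 (zero_le_one' ℝ), mul_one]
    exact sum_pos' (fun i _ => mul_nonneg (hs i) (hc i)) ⟨k, mem_univ k, mul_pos hsk hck⟩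
  exact exists_pos_mul_eq_of_antitone hcont (antitone_residualSum hc hs) hzero hw

theorem residualSum_eq_sum_filter (c s : ι → ℝ) (a : ℝ) :
    residualSum c s a = (∑ k with a * c k ≤ 1, s k * c k) -
      a * ∑ k with a * c k ≤ 1, s k * c k ^ 2 := by
  rw [residualSum, mul_sum, ← sum_sub_distrib, sum_filter]
  refine sum_congr rfl fun k _ => ?_
  split_ifs with hle
  · rw [posPart_eq_self.2 (sub_nonneg.2 hle)]
    ring
  · rw [posPart_eq_zero.2 (sub_nonpos.2 (not_le.1 hle).le), mul_zero]

theorem eq_sum_filter_div_of_stationary (hs : ∀ k, 0 ≤ s k) (hw : 0 < w)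
    (hstat : a * w = residualSum c s a) :
    a = (∑ k with a * c k ≤ 1, s k * c k) / ((∑ k with a * c k ≤ 1, s k * c k ^ 2) + w) := by
  have hden : 0 ≤ ∑ k with a * c k ≤ 1, s k * c k ^ 2 :=
    sum_nonneg fun k _ => mul_nonneg (hs k) (sq_nonneg _)
  rw [residualSum_eq_sum_filter] at hstat
  rw [eq_div_iff (by linarith)]
  linarith

end MSE

theorem tdm_computation_optimal_threshold_structure_general
    {ι : Type*} [Fintype ι] {h ν P sighat : ι → ℝ}
    (hh : ∀ k, 0 ≤ h k) (hν : ∀ k, 0 < ν k) (hP : ∀ k, 0 ≤ P k) (hsig : ∀ k, 0 ≤ sighat k)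
    (hactive : ∃ k, 0 < h k ∧ 0 < P k ∧ 0 < sighat k) {σw2 : ℝ} (hσw2 : 0 < σw2) :
    ∃ (a : ℝ) (b : ι → ℝ),
      0 < a ∧
      (∀ k, b k ^ 2 * ν k ^ 2 ≤ P k) ∧
      (∀ (a' : ℝ) (b' : ι → ℝ), (∀ k, b' k ^ 2 * ν k ^ 2 ≤ P k) →
        aircompMSE h sighat σw2 a b ≤ aircompMSE h sighat σw2 a' b') ∧
      (∀ k, (a * h k * √(P k) / ν k ≤ 1 → b k = √(P k) / ν k) ∧
            (1 < a * h k * √(P k) / ν k → b k = 1 / (a * h k))) ∧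
      a = (∑ k with a * h k * √(P k) / ν k ≤ 1, h k * sighat k * √(P k) / ν k) /
          ((∑ k with a * h k * √(P k) / ν k ≤ 1, h k ^ 2 * sighat k * P k / ν k ^ 2) + σw2) := by
  let p : ι → ℝ := fun k => √(P k) / ν k
  have hp (k : ι) : 0 ≤ p k := div_nonneg (Real.sqrt_nonneg _) (hν k).le
  have hfeasible (k : ι) (x : ℝ) : |x| ≤ p k ↔ x ^ 2 * ν k ^ 2 ≤ P k :=
    abs_le_sqrt_div_iff (hν k) (hP k)
  obtain ⟨a, ha, hstat⟩ : ∃ a, 0 < a ∧ a * σw2 = residualSum (h * p) sighat a :=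
    exists_pos_stationary (fun k => mul_nonneg (hh k) (hp k)) hsig
      (hactive.imp fun k ⟨hhk, hPk, hsk⟩ =>
        ⟨mul_pos hhk (div_pos (Real.sqrt_pos.2 hPk) (hν k)), hsk⟩) hσw2
  refine ⟨a, fun k => thresholdAmplitude (h k) (p k) a, ha,
    fun k => (hfeasible k _).1 (abs_thresholdAmplitude_le _ _ (hp k)),
    fun a' b' hb' => aircompMSE_thresholdAmplitude_le_of_stationary hh hsig hσw2.le hstat a'
      fun k => (hfeasible k _).2 (hb' k), fun k => ?_, ?_⟩
  · rw [mul_div_assoc]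
    exact ⟨fun hle => if_pos hle, fun hlt => if_neg (not_le.2 hlt)⟩
  · have hthreshold (k : ι) : a * h k * √(P k) / ν k = a * (h * p) k := by
      simp only [p, Pi.mul_apply]
      ring
    have hnum (k : ι) : h k * sighat k * √(P k) / ν k = sighat k * (h * p) k := by
      simp only [p, Pi.mul_apply]
      ring
    have hden (k : ι) : h k ^ 2 * sighat k * P k / ν k ^ 2 = sighat k * (h * p) k ^ 2 := by
      simp only [p, Pi.mul_apply, mul_pow, div_pow, Real.sq_sqrt (hP k)]
      ring
    simp only [hthreshold, hnum, hden]
    exact eq_sum_filter_div_of_stationary hsig hσw2 hstat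

/-- Theorem 3 of the paper: the computation-optimal AirComp transceiver
design in the TDM setting.  Here `sighat k` denotes the estimated feature variance `σ̂_k²`
and `σw2` denotes the receiver noise variance `σ_w²`.  There is a global minimizer
`(a, b)` of the AirComp MSE over the feasible set with `a > 0`, such that devices with
`a h_k √P_k / ν_k ≤ 1` transmit at full power `b_k = √P_k / ν_k`, the remaining devices
use channel inversion `b_k = 1/(a h_k)`, and `a` has the stated closed form. -/
theorem tdm_computation_optimal_threshold_structure
    (K : ℕ) (hK : 1 ≤ K)
    (h ν P sighat : Fin K → ℝ)
    (hh : ∀ k, 0 < h k) (hν : ∀ k, 0 < ν k) (hP : ∀ k, 0 < P k)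
    (hsig : ∀ k, 0 < sighat k)
    (σw2 : ℝ) (hσw2 : 0 < σw2) :
    ∃ (a : ℝ) (b : Fin K → ℝ),
      0 < a ∧
      (∀ k, (b k) ^ 2 * (ν k) ^ 2 ≤ P k) ∧
      (∀ (a' : ℝ) (b' : Fin K → ℝ), (∀ k, (b' k) ^ 2 * (ν k) ^ 2 ≤ P k) →
        (∑ k, (a * h k * b k - 1) ^ 2 * sighat k) + a ^ 2 * σw2 ≤
          (∑ k, (a' * h k * b' k - 1) ^ 2 * sighat k) + a' ^ 2 * σw2) ∧
      (∀ k, (a * h k * Real.sqrt (P k) / ν k ≤ 1 → b k = Real.sqrt (P k) / ν k) ∧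
            (1 < a * h k * Real.sqrt (P k) / ν k → b k = 1 / (a * h k))) ∧
      a = (∑ k ∈ univ.filter (fun k => a * h k * Real.sqrt (P k) / ν k ≤ 1),
              h k * sighat k * Real.sqrt (P k) / ν k) /
          ((∑ k ∈ univ.filter (fun k => a * h k * Real.sqrt (P k) / ν k ≤ 1),
              (h k) ^ 2 * sighat k * P k / (ν k) ^ 2) + σw2) :=
  tdm_computation_optimal_threshold_structure_general (fun k => (hh k).le) hν
    (fun k => (hP k).le) (fun k => (hsig k).le) ⟨⟨0, hK⟩, hh _, hP _, hsig _⟩ hσw2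
end

section
/- Let K ≥ 1, u_k > 0 for k ∈ {1,…,K}, and s > 0. Define F(c) = (Σ_{k=1}^K c_k)² / (Σ_{k=1}^K c_k² + s) for c in the box B = ∏_{k=1}^K [0, u_k]. Then there exists τ ≥ 0 such that the point c* with c*_k = min(u_k, τ) for all k satisfies F(c*) ≥ F(c) for every c ∈ B. That is, the decision-optimal power allocation has a threshold (capped) structure in which coordinates with u_k ≤ τ are saturated at u_k and all remaining coordinates equal the common cap τ. -/
/-!
Write `m k = min (u k) τ`. The Cauchy–Schwarz inequality for the vectors `m` and `c`, both extended
by the coordinate `√s`, gives `(∑ m c + s)² ≤ (∑ m² + s) (∑ c² + s)`. Hence every `c` with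
`0 ≤ τ ∑ c ≤ ∑ m c + s` has `F(c) ≤ (∑ m² + s) / τ²`, and `m` itself attains this bound as soon as
`τ ∑ m = ∑ m² + s`. The last equation says `∑ (τ - m) m = s`; it has a solution `τ > 0` by the
intermediate value theorem, and for that `τ` every `c ≤ u` satisfies `τ ∑ c ≤ ∑ m c + s`, because
`τ - m k` vanishes unless the `k`-th coordinate is saturated at `m k = u k`.
-/

open Finset

theorem sum_mul_add_sq_le_sq_add_mul_sq_add {ι R : Type*} [Fintype ι] [CommRing R] [LinearOrder R]
    [IsStrictOrderedRing R] {s : R} (hs : 0 ≤ s) (m c : ι → R) :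
    (∑ k, m k * c k + s) ^ 2 ≤ (∑ k, m k ^ 2 + s) * (∑ k, c k ^ 2 + s) := by
  have cauchySchwarz := sum_sq_le_sum_mul_sum_of_sq_le_mul (univ : Finset (Option ι))
    (r := fun i => i.elim s fun k => m k * c k)
    (f := fun i => i.elim s fun k => m k ^ 2) (g := fun i => i.elim s fun k => c k ^ 2)
    (by rintro (_ | k) _ <;> simp [hs, sq_nonneg])
    (by rintro (_ | k) _ <;> simp [hs, sq_nonneg])
    (by rintro (_ | k) _ <;> simp [sq, mul_mul_mul_comm])
  simpa only [Fintype.sum_option, Option.elim_none, Option.elim_some, add_comm s]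
    using cauchySchwarz

section WeakDuality

variable {ι 𝕜 : Type*} [Fintype ι] [Field 𝕜]

/-- The normalized Mahalanobis-distance objective `F(c)` of the effective transmit gains `c`, with
equivalent noise variance `s`. -/
def mahalanobisObjective (s : 𝕜) (c : ι → 𝕜) : 𝕜 :=
  (∑ k, c k) ^ 2 / (∑ k, c k ^ 2 + s)

variable {s τ : 𝕜}

theorem mahalanobisObjective_eq_of_mul_sum_eq {m : ι → 𝕜} (hτ : τ ≠ 0)
    (hm : τ * ∑ k, m k = ∑ k, m k ^ 2 + s) :
    mahalanobisObjective s m = (∑ k, m k ^ 2 + s) / τ ^ 2 := by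
  rw [mahalanobisObjective, ← hm]
  field_simp

variable [LinearOrder 𝕜] [IsStrictOrderedRing 𝕜]

theorem mahalanobisObjective_le_of_mul_sum_le {m c : ι → 𝕜} (hs : 0 < s) (hτ : 0 < τ)
    (hc : 0 ≤ ∑ k, c k) (hmc : τ * ∑ k, c k ≤ ∑ k, m k * c k + s) :
    mahalanobisObjective s c ≤ (∑ k, m k ^ 2 + s) / τ ^ 2 := by
  have hden : 0 < ∑ k, c k ^ 2 + s := by positivity
  rw [mahalanobisObjective, div_le_div_iff₀ hden (by positivity)]
  calc (∑ k, c k) ^ 2 * τ ^ 2 = (τ * ∑ k, c k) ^ 2 := by ring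
    _ ≤ (∑ k, m k * c k + s) ^ 2 := by gcongr
    _ ≤ (∑ k, m k ^ 2 + s) * (∑ k, c k ^ 2 + s) :=
      sum_mul_add_sq_le_sq_add_mul_sq_add hs.le m c

end WeakDuality

section CapNoiseLevel

variable {ι R : Type*} [Fintype ι] [CommRing R] [LinearOrder R]

/-- The noise variance `s` at which the gains `m k = min (u k) τ` satisfy the stationarity equation
`τ ∑ m = ∑ m² + s` of the objective. -/
def capNoiseLevel (u : ι → R) (τ : R) : R :=
  ∑ k, (τ - min (u k) τ) * min (u k) τ

theorem mul_sum_min_eq_add_capNoiseLevel (u : ι → R) (τ : R) :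
    τ * ∑ k, min (u k) τ = ∑ k, min (u k) τ ^ 2 + capNoiseLevel u τ := by
  rw [capNoiseLevel, mul_sum, ← sum_add_distrib]
  exact sum_congr rfl fun k _ => by ring

theorem capNoiseLevel_of_forall_le {u : ι → R} {τ : R} (hu : ∀ k, u k ≤ τ) :
    capNoiseLevel u τ = τ * ∑ k, u k - ∑ k, u k ^ 2 := by
  simp only [capNoiseLevel, min_eq_left (hu _), mul_sum, ← sum_sub_distrib]
  exact sum_congr rfl fun k _ => by ring

variable [IsStrictOrderedRing R]

theorem capNoiseLevel_zero_nonpos (u : ι → R) : capNoiseLevel u 0 ≤ 0 :=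
  sum_nonpos fun _ _ => mul_nonpos_of_nonneg_of_nonpos
    (sub_nonneg.2 (min_le_right _ _)) (min_le_right _ _)

theorem sub_min_mul_le_sub_min_mul_min {a x : R} (hx : x ≤ a) (τ : R) :
    (τ - min a τ) * x ≤ (τ - min a τ) * min a τ := by
  rcases le_total a τ with saturated | unsaturated
  · rw [min_eq_left saturated]
    exact mul_le_mul_of_nonneg_left hx (sub_nonneg.2 saturated)
  · simp only [min_eq_right unsaturated, sub_self, zero_mul, le_refl]

theorem mul_sum_le_add_capNoiseLevel {u c : ι → R} (hc : ∀ k, c k ≤ u k) (τ : R) :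
    τ * ∑ k, c k ≤ ∑ k, min (u k) τ * c k + capNoiseLevel u τ := by
  rw [capNoiseLevel, mul_sum, ← sum_add_distrib]
  refine sum_le_sum fun k _ => ?_
  linarith [sub_min_mul_le_sub_min_mul_min (hc k) τ]

end CapNoiseLevel

section Existence

open Filter

variable {ι : Type*} [Fintype ι]

theorem tendsto_capNoiseLevel_atTop {𝕜 : Type*} [Field 𝕜] [LinearOrder 𝕜] [IsStrictOrderedRing 𝕜]
    {u : ι → 𝕜} (hu : 0 < ∑ k, u k) :
    Tendsto (capNoiseLevel u) atTop atTop := by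
  have saturated : ∀ᶠ τ in atTop, ∀ k, u k ≤ τ :=
    eventually_all.2 fun k => eventually_ge_atTop (u k)
  refine Tendsto.congr' (saturated.mono fun τ hτ => (capNoiseLevel_of_forall_le hτ).symm) ?_
  simpa only [sub_eq_add_neg, id_eq] using
    tendsto_atTop_add_const_right _ (-∑ k, u k ^ 2) (tendsto_id.atTop_mul_const hu)

theorem exists_pos_capNoiseLevel_eq {u : ι → ℝ} (hu : 0 < ∑ k, u k) {s : ℝ} (hs : 0 < s) :
    ∃ τ > 0, capNoiseLevel u τ = s := by
  have hcont : Continuous (capNoiseLevel u) := by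
    unfold capNoiseLevel
    fun_prop
  obtain ⟨T, hsT, hT⟩ :=
    (((tendsto_capNoiseLevel_atTop hu).eventually_ge_atTop s).and (eventually_ge_atTop 0)).exists
  obtain ⟨τ, hτ, hτs⟩ := intermediate_value_Ioc hT hcont.continuousOn
    ⟨(capNoiseLevel_zero_nonpos u).trans_lt hs, hsT⟩
  exact ⟨τ, hτ.1, hτs⟩

theorem tdm_decision_optimal_capped_structure_general {u : ι → ℝ} (hu : 0 < ∑ k, u k)
    {s : ℝ} (hs : 0 < s) :
    ∃ τ > 0, 0 ≤ ∑ k, min (u k) τ ∧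
      ∀ c : ι → ℝ, (∀ k, c k ≤ u k) → 0 ≤ ∑ k, c k →
        mahalanobisObjective s c ≤ mahalanobisObjective s fun k => min (u k) τ := by
  obtain ⟨τ, hτ, rfl⟩ := exists_pos_capNoiseLevel_eq hu hs
  have stationary := mul_sum_min_eq_add_capNoiseLevel u τ
  refine ⟨τ, hτ, ?_, fun c hcu hc => ?_⟩
  · refine nonneg_of_mul_nonneg_right ?_ hτ
    rw [stationary]
    positivity
  · rw [mahalanobisObjective_eq_of_mul_sum_eq hτ.ne' stationary]
    exact mahalanobisObjective_le_of_mul_sum_le hs hτ hc (mul_sum_le_add_capNoiseLevel hcu τ)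

end Existence

/-- Theorem 4 of the paper: the decision-optimal power allocation in the
TDM setting has a threshold (capped) structure.  With
`F(c) = (Σ c_k)² / (Σ c_k² + s)` on the box `0 ≤ c_k ≤ u_k`, there exists a cap `τ ≥ 0`
such that `c*_k = min (u_k, τ)` is a global maximizer of `F` over the box. -/
theorem tdm_decision_optimal_capped_structure
    (K : ℕ) (hK : 1 ≤ K)
    (u : Fin K → ℝ) (hu : ∀ k, 0 < u k)
    (s : ℝ) (hs : 0 < s) :
    ∃ τ : ℝ, 0 ≤ τ ∧
      ∀ c : Fin K → ℝ, (∀ k, 0 ≤ c k ∧ c k ≤ u k) →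
        (∑ k, c k) ^ 2 / ((∑ k, (c k) ^ 2) + s) ≤
          (∑ k, min (u k) τ) ^ 2 / ((∑ k, (min (u k) τ) ^ 2) + s) := by
  obtain ⟨τ, hτ, -, hmax⟩ := tdm_decision_optimal_capped_structure_general
    (sum_pos (fun k _ => hu k) ⟨⟨0, hK⟩, mem_univ _⟩) hs
  exact ⟨τ, hτ.le, fun c hc => hmax c (fun k => (hc k).2) (sum_nonneg fun k _ => (hc k).1)⟩
end

section
/- Let K ≥ 1, let σ² > 0, let σ_1²,…,σ_K² > 0, and define ϱ_k = σ²/(σ² + σ_k²) for each k. Then (Σ_{k=1}^K ϱ_k)² · (Σ_{k=1}^K σ_k²) ≥ K² · (Σ_{k=1}^K ϱ_k² σ_k²), with equality if and only if σ_1² = σ_2² = ⋯ = σ_K². -/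
open Finset

/-!
The weights `ϱ` vary oppositely to the variances `v`, and also oppositely to `ϱ v`, because
`ϱ v = σ² (1 - ϱ)`. Chebyshev's sum inequality therefore applies to both pairs, giving
`K ∑ ϱ² v ≤ (∑ ϱ) (∑ ϱ v)` and `K ∑ ϱ v ≤ (∑ ϱ) (∑ v)`, which are chained through `∑ ϱ v`.
Equality has to hold in both, and equality in Chebyshev is read off the double-sum identity
for its defect.
-/

section Chebyshev

variable {ι R : Type*} [CommRing R]

theorem sum_sum_sub_mul_sub (s : Finset ι) (f g : ι → R) :
    ∑ i ∈ s, ∑ j ∈ s, (f j - f i) * (g j - g i) =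
      2 * (#s * ∑ i ∈ s, f i * g i - (∑ i ∈ s, f i) * ∑ i ∈ s, g i) := by
  simp only [sub_mul, mul_sub, sum_sub_distrib, sum_const, nsmul_eq_mul, ← mul_sum, ← sum_mul]
  ring

theorem sq_sum_mul_sum_sub_card_sq_mul_sum_sq_mul (s : Finset ι) (f g : ι → R) :
    (∑ i ∈ s, f i) ^ 2 * ∑ i ∈ s, g i - (#s : R) ^ 2 * ∑ i ∈ s, f i ^ 2 * g i =
      (∑ i ∈ s, f i) * ((∑ i ∈ s, f i) * ∑ i ∈ s, g i - #s * ∑ i ∈ s, f i * g i) +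
        #s * ((∑ i ∈ s, f i) * ∑ i ∈ s, f i * g i - #s * ∑ i ∈ s, f i * (f i * g i)) := by
  simp only [sq, mul_assoc]
  ring

variable [LinearOrder R] [IsStrictOrderedRing R] {s : Finset ι} {f g : ι → R}

theorem sum_mul_sum_eq_card_mul_sum_mul_iff_of_antivaryOn (hfg : AntivaryOn f g s) :
    (∑ i ∈ s, f i) * ∑ i ∈ s, g i = #s * ∑ i ∈ s, f i * g i ↔
      ∀ i ∈ s, ∀ j ∈ s, f i = f j ∨ g i = g j := by
  have hterm : ∀ i ∈ s, ∀ j ∈ s, (f j - f i) * (g j - g i) ≤ 0 :=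
    fun _ hi _ hj ↦ hfg.sub_mul_sub_nonpos hi hj
  calc
    (∑ i ∈ s, f i) * ∑ i ∈ s, g i = #s * ∑ i ∈ s, f i * g i
      ↔ ∑ i ∈ s, ∑ j ∈ s, (f j - f i) * (g j - g i) = 0 := by
        rw [sum_sum_sub_mul_sub, mul_eq_zero_iff_left two_ne_zero, sub_eq_zero, eq_comm]
    _ ↔ ∀ i ∈ s, ∀ j ∈ s, (f j - f i) * (g j - g i) = 0 := by
        rw [sum_eq_zero_iff_of_nonpos fun i hi ↦ sum_nonpos (hterm i hi)]
        exact forall₂_congr fun i hi ↦ sum_eq_zero_iff_of_nonpos (hterm i hi)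
    _ ↔ ∀ i ∈ s, ∀ j ∈ s, f i = f j ∨ g i = g j := by
        simp only [mul_eq_zero, sub_eq_zero, eq_comm]

theorem card_sq_mul_sum_sq_mul_le_sq_sum_mul_sum (hf : ∀ i ∈ s, 0 ≤ f i)
    (hfg : AntivaryOn f g s) (hffg : AntivaryOn f (fun i ↦ f i * g i) s) :
    (#s : R) ^ 2 * ∑ i ∈ s, f i ^ 2 * g i ≤ (∑ i ∈ s, f i) ^ 2 * ∑ i ∈ s, g i := by
  rw [← sub_nonneg, sq_sum_mul_sum_sub_card_sq_mul_sum_sq_mul]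
  exact add_nonneg
    (mul_nonneg (sum_nonneg hf) (sub_nonneg.2 hfg.card_mul_sum_le_sum_mul_sum))
    (mul_nonneg (Nat.cast_nonneg _) (sub_nonneg.2 hffg.card_mul_sum_le_sum_mul_sum))

theorem sq_sum_mul_sum_eq_card_sq_mul_sum_sq_mul_iff (hf : ∀ i ∈ s, 0 ≤ f i)
    (hfg : AntivaryOn f g s) (hffg : AntivaryOn f (fun i ↦ f i * g i) s) :
    (∑ i ∈ s, f i) ^ 2 * ∑ i ∈ s, g i = (#s : R) ^ 2 * ∑ i ∈ s, f i ^ 2 * g i ↔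
      ∀ i ∈ s, ∀ j ∈ s, f i = f j ∨ g i = 0 ∧ g j = 0 := by
  obtain hsum | hsum := (sum_nonneg hf).eq_or_lt
  · have hzero : ∀ i ∈ s, f i = 0 := (sum_eq_zero_iff_of_nonneg hf).1 hsum.symm
    have hsum_sq : ∑ i ∈ s, f i ^ 2 * g i = 0 := sum_eq_zero fun i hi ↦ by simp [hzero i hi]
    refine iff_of_true (by simp [← hsum, hsum_sq]) fun i hi j hj ↦ ?_
    exact .inl ((hzero i hi).trans (hzero j hj).symm)
  have hcard : (0 : R) < #s := Nat.cast_pos.2 (card_pos.2 (nonempty_of_sum_ne_zero hsum.ne'))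
  have hdefect_fg := sub_nonneg.2 hfg.card_mul_sum_le_sum_mul_sum
  have hdefect_ffg := sub_nonneg.2 hffg.card_mul_sum_le_sum_mul_sum
  rw [← sub_eq_zero, sq_sum_mul_sum_sub_card_sq_mul_sum_sq_mul,
    add_eq_zero_iff_of_nonneg (mul_nonneg hsum.le hdefect_fg) (mul_nonneg hcard.le hdefect_ffg),
    mul_eq_zero_iff_left hsum.ne', mul_eq_zero_iff_left hcard.ne', sub_eq_zero, sub_eq_zero,
    sum_mul_sum_eq_card_mul_sum_mul_iff_of_antivaryOn hfg,
    sum_mul_sum_eq_card_mul_sum_mul_iff_of_antivaryOn hffg]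
  simp only [← forall_and, ← or_and_left]
  refine forall₄_congr fun i _ j _ ↦ or_congr_right' fun hne ↦ ⟨?_, ?_⟩
  · rintro ⟨hg, hmul⟩
    rw [hg] at hmul ⊢
    exact and_self_iff.2 ((mul_eq_mul_right_iff.1 hmul).resolve_left hne)
  · rintro ⟨hi_zero, hj_zero⟩
    simp only [hi_zero, hj_zero, mul_zero, and_self]

end Chebyshev

section Shrinkage

variable {𝕜 : Type*} [Field 𝕜]

/-- The MMSE shrinkage weight `ϱ = σ² / (σ² + σ_k²)` of an observation with noise variance
`v = σ_k²`, under a Gaussian prior of variance `c = σ²`. -/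
def mmseShrinkage (c v : 𝕜) : 𝕜 :=
  c / (c + v)

theorem mmseShrinkage_mul_self {c v : 𝕜} (h : c + v ≠ 0) :
    mmseShrinkage c v * v = c * (1 - mmseShrinkage c v) := by
  unfold mmseShrinkage
  field_simp
  ring

variable [LinearOrder 𝕜] [IsStrictOrderedRing 𝕜] {c : 𝕜}

theorem strictAntiOn_mmseShrinkage (hc : 0 < c) :
    StrictAntiOn (mmseShrinkage c) {v | 0 < c + v} :=
  fun _ hv _ _ hvw ↦ div_lt_div_of_pos_left hc hv (add_lt_add_right hvw c)

variable {ι : Type*} {s : Finset ι} {v : ι → 𝕜}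

theorem antivaryOn_mmseShrinkage (hc : 0 < c) (hv : ∀ i ∈ s, 0 < c + v i) :
    AntivaryOn (fun i ↦ mmseShrinkage c (v i)) v s :=
  fun i hi j hj hij ↦ (strictAntiOn_mmseShrinkage hc (hv i hi) (hv j hj) hij).le

theorem antivaryOn_mmseShrinkage_mul_self (hc : 0 < c) (hv : ∀ i ∈ s, 0 < c + v i) :
    AntivaryOn (fun i ↦ mmseShrinkage c (v i)) (fun i ↦ mmseShrinkage c (v i) * v i) s := by
  intro i hi j hj hij
  simp only [mmseShrinkage_mul_self (hv i hi).ne', mmseShrinkage_mul_self (hv j hj).ne'] at hij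
  exact ((sub_lt_sub_iff_left 1).1 (lt_of_mul_lt_mul_left hij hc.le)).le

theorem mmse_aggregation_inequality_general (hc : 0 < c) (hv : ∀ i ∈ s, 0 < c + v i) :
    (#s : 𝕜) ^ 2 * (∑ i ∈ s, mmseShrinkage c (v i) ^ 2 * v i) ≤
        (∑ i ∈ s, mmseShrinkage c (v i)) ^ 2 * (∑ i ∈ s, v i) ∧
    ((∑ i ∈ s, mmseShrinkage c (v i)) ^ 2 * (∑ i ∈ s, v i) =
        (#s : 𝕜) ^ 2 * (∑ i ∈ s, mmseShrinkage c (v i) ^ 2 * v i) ↔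
      ∀ i ∈ s, ∀ j ∈ s, v i = v j) := by
  have hnonneg : ∀ i ∈ s, 0 ≤ mmseShrinkage c (v i) := fun i hi ↦ (div_pos hc (hv i hi)).le
  have hanti := antivaryOn_mmseShrinkage hc hv
  have hanti_mul := antivaryOn_mmseShrinkage_mul_self hc hv
  refine ⟨card_sq_mul_sum_sq_mul_le_sq_sum_mul_sum hnonneg hanti hanti_mul, ?_⟩
  rw [sq_sum_mul_sum_eq_card_sq_mul_sum_sq_mul_iff hnonneg hanti hanti_mul]
  refine forall₄_congr fun i hi j hj ↦ ?_
  rw [(strictAntiOn_mmseShrinkage hc).injOn.eq_iff (hv i hi) (hv j hj)]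
  exact or_iff_left_of_imp fun ⟨hi_zero, hj_zero⟩ ↦ hi_zero.trans hj_zero.symm

end Shrinkage

/-- MMSE aggregation beats ML aggregation: with shrinkage weights
`ϱ_k = σ²/(σ² + σ_k²)`, one has `(Σ ϱ_k)² (Σ σ_k²) ≥ K² (Σ ϱ_k² σ_k²)`, with equality iff
all sensing noise variances are equal.  Here `σk k` denotes the variance `σ_k²` and `σ2`
denotes the prior variance `σ²`. -/
theorem mmse_aggregation_inequality
    (K : ℕ) (hK : 1 ≤ K)
    (σ2 : ℝ) (hσ2 : 0 < σ2)
    (σk : Fin K → ℝ) (hσk : ∀ k, 0 < σk k) :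
    (K : ℝ) ^ 2 * (∑ k, (σ2 / (σ2 + σk k)) ^ 2 * σk k) ≤
        (∑ k, σ2 / (σ2 + σk k)) ^ 2 * (∑ k, σk k) ∧
    ((∑ k, σ2 / (σ2 + σk k)) ^ 2 * (∑ k, σk k) =
        (K : ℝ) ^ 2 * (∑ k, (σ2 / (σ2 + σk k)) ^ 2 * σk k) ↔ ∀ k j, σk k = σk j) := by
  simpa [mmseShrinkage] using
    mmse_aggregation_inequality_general (s := univ) hσ2 fun k _ ↦ add_pos hσ2 (hσk k)
end
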